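/- Let n ≥ 2 and 1 ≤ k ≤ n be integers, let μ be the standard Gaussian measure on ℝ^n, and let x ∈ Σ_k with ‖x‖₂ = 1. Let d := ⌊2k·lg(ne)⌋, α := inf over θ ∈ (0, 2π) of (2/π)·θ/(1 − cos θ), and let ε, δ ∈ (0,1) and m ≥ max{ (8d/ε)·lg(8e/ε), (4/ε)·lg(2/δ) }. Draw a_1, …, a_m independently from μ. Then with μ^m-outer measure at least 1 − δ, every unit-norm k-sparse vector x̂ ∈ Σ_k satisfying (⟨a_i, x̂⟩ ≥ 0 if and only if ⟨a_i, x⟩ ≥ 0) for all i = 1, …, m also satisfies ‖x̂ − x‖₂² ≤ (4/α)·ε. -/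

import Mathlib

open Real MeasureTheory

noncomputable section

/-- A vector `x : ℝ^n` is `k`-sparse if it has at most `k` nonzero components. -/
def sparse (n k : ℕ) (x : Fin n → ℝ) : Prop :=
  ∃ s : Finset (Fin n), s.card ≤ k ∧ ∀ i ∉ s, x i = 0


open ProbabilityTheory in
lemma pair_law {n : ℕ} (x w : Fin n → ℝ) (hx : ∑ j, x j ^ 2 = 1) (hw : ∑ j, w j ^ 2 = 1)
    (hxw : ∑ j, x j * w j = 0) :
    (Measure.pi fun _ : Fin n => gaussianReal 0 1).map
      (fun a => (∑ j, a j * x j, ∑ j, a j * w j)) = (gaussianReal 0 1).prod (gaussianReal 0 1) := by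
  have hm : Measurable (fun a : Fin n → ℝ => (∑ j, a j * x j, ∑ j, a j * w j)) := by fun_prop
  have : IsProbabilityMeasure ((Measure.pi fun _ : Fin n => gaussianReal 0 1).map
      (fun a => (∑ j, a j * x j, ∑ j, a j * w j))) :=
    Measure.isProbabilityMeasure_map hm.aemeasurable
  rw [← charFun_eq_prod_iff]
  intro t
  rw [Measure.map_map (by fun_prop) hm, charFun_apply,
    integral_map (by fun_prop) (by fun_prop)]
  have key : ∀ a : Fin n → ℝ, Complex.exp (((inner ℝ ((WithLp.toLp 2 ∘ fun a : Fin n → ℝ => (∑ j, a j * x j, ∑ j, a j * w j)) a) t : ℝ) : ℂ) * Complex.I)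
      = ∏ j, Complex.exp ((((t.ofLp.1 * x j + t.ofLp.2 * w j) * a j : ℝ) : ℂ) * Complex.I) := by
    intro a
    rw [← Complex.exp_sum, ← Finset.sum_mul, ← Complex.ofReal_sum]
    congr 3
    simp only [Function.comp, WithLp.prod_inner_apply]
    simp only [RCLike.inner_apply, conj_trivial, Finset.mul_sum, ← Finset.sum_add_distrib]
    apply Finset.sum_congr rfl
    intros; ring
  simp_rw [key]
  rw [integral_fintype_prod_eq_prod (f := fun j (y : ℝ) => Complex.exp ((((t.ofLp.1 * x j + t.ofLp.2 * w j) * y : ℝ) : ℂ) * Complex.I))]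
  simp_rw [Complex.ofReal_mul, ← charFun_apply_real, charFun_gaussianReal]
  rw [← Complex.exp_sum, ← Complex.exp_add]
  congr 1
  have e : ∑ j, (t.ofLp.1 * x j + t.ofLp.2 * w j)^2 = t.ofLp.1 ^ 2 + t.ofLp.2 ^ 2 := by
    have : ∀ j, (t.ofLp.1 * x j + t.ofLp.2 * w j)^2 = t.ofLp.1^2 * x j ^ 2 + 2 * t.ofLp.1 * t.ofLp.2 * (x j * w j) + t.ofLp.2 ^2 * w j ^ 2 := by
      intro j; ring
    simp_rw [this, Finset.sum_add_distrib, ← Finset.mul_sum, hx, hw, hxw]; ring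
  have e' := congrArg (fun r : ℝ => (r : ℂ)) e
  push_cast at e'
  simp only [Complex.ofReal_zero, mul_zero, zero_mul, NNReal.coe_one, Complex.ofReal_one, one_mul, zero_sub, Complex.ofReal_add, Complex.ofReal_mul]
  rw [Finset.sum_neg_distrib, ← Finset.sum_div, e']
  ring

open ProbabilityTheory in
lemma gauss_prod_eq (D : Set (ℝ × ℝ)) (hD : MeasurableSet D) :
    (gaussianReal 0 1).prod (gaussianReal 0 1) D =
     ∫⁻ p in Set.Ioi (0:ℝ) ×ˢ Set.Ioo (-π) π, ENNReal.ofReal (p.1 * ((√(2 * π))⁻¹ ^ 2 * Real.exp (- p.1 ^ 2 / 2))) *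
       D.indicator 1 (p.1 * cos p.2, p.1 * sin p.2) := by
  rw [gaussianReal_of_var_ne_zero 0 one_ne_zero, prod_withDensity (by fun_prop) (by fun_prop),
    withDensity_apply _ hD, ← lintegral_indicator hD, ← Measure.volume_eq_prod,
    ← lintegral_comp_polarCoord_symm]
  simp only [polarCoord_target, polarCoord_symm_apply]
  refine setLIntegral_congr_fun (measurableSet_Ioi.prod measurableSet_Ioo) ?_
  rintro ⟨r, φ⟩ ⟨hr, -⟩
  simp only [Set.mem_Ioi] at hr
  by_cases hh : (r * cos φ, r * sin φ) ∈ D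
  · simp only [Set.indicator_of_mem hh]
    simp only [gaussianPDF, gaussianPDFReal, smul_eq_mul, Pi.one_apply, mul_one]
    rw [← ENNReal.ofReal_mul (by positivity), ← ENNReal.ofReal_mul (by positivity)]
    congr 2
    simp only [NNReal.coe_one, mul_one, sub_zero]
    rw [mul_mul_mul_comm, ← Real.exp_add, ← pow_two]
    congr 2
    have := cos_sq_add_sin_sq φ
    linear_combination (-r^2/2) * this
  · simp [Set.indicator_of_notMem hh]

open ProbabilityTheory in
lemma wedge_half (θ : ℝ) (h0 : 0 ≤ θ) (h1 : θ ≤ π) :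
    ENNReal.ofReal (θ / (2 * π)) ≤ (gaussianReal 0 1).prod (gaussianReal 0 1)
      {p : ℝ × ℝ | 0 < p.1 ∧ cos θ * p.1 + sin θ * p.2 < 0} := by
  have hD : MeasurableSet {p : ℝ × ℝ | 0 < p.1 ∧ cos θ * p.1 + sin θ * p.2 < 0} :=
    by measurability
  set g : ℝ → ENNReal := fun r => ENNReal.ofReal (r * ((√(2 * π))⁻¹ ^ 2 * Real.exp (- r ^ 2 / 2))) with hg
  have hgm : Measurable g := by fun_prop
  set C := ∫⁻ r in Set.Ioi (0:ℝ), g r with hC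
  have hpr : ∀ s : Set ℝ, ∫⁻ p in Set.Ioi (0:ℝ) ×ˢ s, g p.1 = C * volume s := by
    intro s
    rw [Measure.volume_eq_prod, ← Measure.prod_restrict]
    have := lintegral_prod_mul (μ := volume.restrict (Set.Ioi (0:ℝ))) (ν := volume.restrict s)
      (f := g) (g := fun _ => 1) hgm.aemeasurable (by fun_prop)
    simpa using this
  have htot : 1 = C * ENNReal.ofReal (2 * π) := by
    have := gauss_prod_eq Set.univ MeasurableSet.univ
    simp only [measure_univ, Set.indicator_univ, Pi.one_apply, mul_one] at this
    rw [this, hpr (Set.Ioo (-π) π), Real.volume_Ioo]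
    congr 2; ring
  rw [gauss_prod_eq _ hD]
  calc ENNReal.ofReal (θ / (2 * π)) = C * ENNReal.ofReal θ := by
        rw [← mul_one (ENNReal.ofReal _), htot, mul_left_comm, ← ENNReal.ofReal_mul (by positivity)]
        congr 2; field_simp
    _ = ∫⁻ p in Set.Ioi (0:ℝ) ×ˢ Set.Ioo (-(π/2)) (-(π/2) + θ), g p.1 := by
        rw [hpr, Real.volume_Ioo]; congr 2; ring
    _ ≤ ∫⁻ p in Set.Ioi (0:ℝ) ×ˢ Set.Ioo (-(π/2)) (-(π/2) + θ), g p.1 *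
       Set.indicator {p : ℝ × ℝ | 0 < p.1 ∧ cos θ * p.1 + sin θ * p.2 < 0} 1 (p.1 * cos p.2, p.1 * sin p.2) := by
        refine setLIntegral_mono' (measurableSet_Ioi.prod measurableSet_Ioo) ?_
        rintro ⟨r, φ⟩ ⟨hr, hφ1, hφ2⟩
        simp only [Set.mem_Ioi] at hr hφ1 hφ2
        rw [Set.indicator_of_mem]
        · simp
        · have c1 : 0 < cos φ := cos_pos_of_mem_Ioo ⟨hφ1, by linarith⟩
          have c2 : cos (θ - φ) < 0 := cos_neg_of_pi_div_two_lt_of_lt (by linarith) (by linarith)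
          rw [cos_sub] at c2
          refine ⟨by positivity, ?_⟩
          show cos θ * (r * cos φ) + sin θ * (r * sin φ) < 0
          nlinarith
    _ ≤ _ := by
        apply lintegral_mono_set
        apply Set.prod_mono le_rfl
        apply Set.Ioo_subset_Ioo <;> linarith [pi_pos]

open ProbabilityTheory in
lemma wedge (θ : ℝ) (h0 : 0 ≤ θ) (h1 : θ ≤ π) :
    ENNReal.ofReal (θ / π) ≤ (gaussianReal 0 1).prod (gaussianReal 0 1)
      {p : ℝ × ℝ | p.1 * (cos θ * p.1 + sin θ * p.2) < 0} := by
  have hD : MeasurableSet {p : ℝ × ℝ | 0 < p.1 ∧ cos θ * p.1 + sin θ * p.2 < 0} :=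
    by measurability
  have hD' : MeasurableSet {p : ℝ × ℝ | p.1 < 0 ∧ 0 < cos θ * p.1 + sin θ * p.2} :=
    by measurability
  have hmp : MeasurePreserving (Prod.map (fun x : ℝ => -x) (fun x : ℝ => -x)) ((gaussianReal 0 1).prod (gaussianReal 0 1)) ((gaussianReal 0 1).prod (gaussianReal 0 1)) := by
    have : MeasurePreserving (fun x : ℝ => -x) (gaussianReal 0 1) (gaussianReal 0 1) :=
      ⟨by fun_prop, by rw [gaussianReal_map_neg]; simp⟩
    exact this.prod this
  have e := hmp.measure_preimage hD'.nullMeasurableSet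
  have hw := wedge_half θ h0 h1
  have e2 : Prod.map (fun x : ℝ => -x) (fun x : ℝ => -x) ⁻¹' {p : ℝ × ℝ | p.1 < 0 ∧ 0 < cos θ * p.1 + sin θ * p.2} = {p : ℝ × ℝ | 0 < p.1 ∧ cos θ * p.1 + sin θ * p.2 < 0} := by
    ext p
    simp only [Set.mem_preimage, Prod.map, Set.mem_ofPred_eq]
    constructor <;> rintro ⟨a, b⟩ <;> constructor <;> linarith
  rw [e2] at e
  have hu : {p : ℝ × ℝ | p.1 * (cos θ * p.1 + sin θ * p.2) < 0} = {p : ℝ × ℝ | 0 < p.1 ∧ cos θ * p.1 + sin θ * p.2 < 0} ∪ {p : ℝ × ℝ | p.1 < 0 ∧ 0 < cos θ * p.1 + sin θ * p.2} := by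
    ext p
    simp only [Set.mem_ofPred_eq, Set.mem_union, mul_neg_iff]
  rw [hu, measure_union _ hD', ← e]
  · calc ENNReal.ofReal (θ / π) = ENNReal.ofReal (θ / (2 * π)) + ENNReal.ofReal (θ / (2 * π)) := by
          rw [← ENNReal.ofReal_add (by positivity) (by positivity)]
          congr 1; field_simp; norm_num
      _ ≤ _ := add_le_add hw hw
  · rw [Set.disjoint_left]; rintro p ⟨h, _⟩ ⟨h', _⟩; linarith

open ProbabilityTheory in
lemma single_law {n : ℕ} (x : Fin n → ℝ) (hx : ∑ j, x j ^ 2 = 1) :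
    (Measure.pi fun _ : Fin n => gaussianReal 0 1).map
      (fun a => ∑ j, a j * x j) = gaussianReal 0 1 := by
  have hm : Measurable (fun a : Fin n → ℝ => ∑ j, a j * x j) := by fun_prop
  have : IsProbabilityMeasure ((Measure.pi fun _ : Fin n => gaussianReal 0 1).map
      (fun a => ∑ j, a j * x j)) :=
    Measure.isProbabilityMeasure_map hm.aemeasurable
  apply Measure.ext_of_charFun
  ext t
  rw [charFun_apply_real, integral_map hm.aemeasurable (by fun_prop)]
  have key : ∀ a : Fin n → ℝ, Complex.exp ((t : ℂ) * ((∑ j, a j * x j : ℝ) : ℂ) * Complex.I)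
      = ∏ j, Complex.exp ((((t * x j) * a j : ℝ) : ℂ) * Complex.I) := by
    intro a
    rw [← Complex.exp_sum, ← Finset.sum_mul, ← Complex.ofReal_sum, ← Complex.ofReal_mul]
    congr 3
    rw [Finset.mul_sum]
    apply Finset.sum_congr rfl
    intros; ring
  simp_rw [key]
  rw [integral_fintype_prod_eq_prod (f := fun j (y : ℝ) => Complex.exp ((((t * x j) * y : ℝ) : ℂ) * Complex.I))]
  simp_rw [Complex.ofReal_mul (_ * _), ← charFun_apply_real, charFun_gaussianReal]
  rw [← Complex.exp_sum]
  congr 1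
  have e : ∑ j, (t * x j)^2 = t ^ 2 := by
    simp_rw [mul_pow, ← Finset.mul_sum, hx]; ring
  have e' := congrArg (fun r : ℝ => (r : ℂ)) e
  push_cast at e'
  simp only [Complex.ofReal_zero, mul_zero, zero_mul, NNReal.coe_one, Complex.ofReal_one, one_mul, zero_sub, Complex.ofReal_mul]
  rw [Finset.sum_neg_distrib, ← Finset.sum_div, e']

open ProbabilityTheory in
lemma hyper_null {n : ℕ} (x : Fin n → ℝ) (hx : ∑ j, x j ^ 2 = 1) :
    (Measure.pi fun _ : Fin n => gaussianReal 0 1) {a | ∑ j, a j * x j = 0} = 0 := by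
  have hm : Measurable (fun a : Fin n → ℝ => ∑ j, a j * x j) := by fun_prop
  have h := Measure.map_apply (μ := Measure.pi fun _ : Fin n => gaussianReal 0 1) hm
    (measurableSet_singleton (0:ℝ))
  have := nullSingletonClass_gaussianReal (μ := 0) (v := 1) one_ne_zero
  rw [single_law x hx, measure_singleton] at h
  exact h.symm

open ProbabilityTheory in
lemma mismatch_ge {n : ℕ} (x y : Fin n → ℝ) (hx : ∑ j, x j ^ 2 = 1) (hy : ∑ j, y j ^ 2 = 1) :
    ENNReal.ofReal (arccos (∑ j, x j * y j) / π) ≤ (Measure.pi fun _ : Fin n => gaussianReal 0 1)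
      {a | (∑ j, a j * x j) * (∑ j, a j * y j) < 0} := by
  set c := ∑ j, x j * y j with hc
  have hsq : ∑ j, (y j - c * x j) ^ 2 = 1 - c ^ 2 := by
    have : ∀ j, (y j - c * x j)^2 = y j ^ 2 - 2 * c * (x j * y j) + c ^2 * x j ^ 2 := by
      intro j; ring
    simp_rw [this, Finset.sum_add_distrib, Finset.sum_sub_distrib, ← Finset.mul_sum, hx, hy, ← hc]; ring
  have hc1 : c ^ 2 ≤ 1 := by
    have : 0 ≤ ∑ j, (y j - c * x j) ^ 2 := by positivity
    linarith
  have hcl : -1 ≤ c := by nlinarith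
  have hcu : c ≤ 1 := by nlinarith
  by_cases hz : c ^ 2 = 1
  · rw [hz, sub_self, Finset.sum_eq_zero_iff_of_nonneg (fun _ _ => by positivity)] at hsq
    have hy' : ∀ j, y j = c * x j := fun j => by
      have := hsq j (Finset.mem_univ _)
      have := pow_eq_zero_iff (two_ne_zero) |>.1 this
      linarith
    rcases (sq_eq_sq_iff_eq_or_eq_neg.1 (hz.trans (one_pow 2).symm)) with h | h
    · rw [h]; simp
    · have : {a : Fin n → ℝ | (∑ j, a j * x j) * (∑ j, a j * y j) < 0} = {a | ∑ j, a j * x j = 0}ᶜ := by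
        ext a
        simp only [hy', h, Set.mem_ofPred_eq, Set.mem_compl_iff]
        have : ∑ j, a j * (-1 * x j) = - ∑ j, a j * x j := by
          rw [← Finset.sum_neg_distrib]; apply Finset.sum_congr rfl; intros; ring
        rw [this]
        constructor
        · intro h h2; rw [h2] at h; simp at h
        · intro h; have := mul_self_pos.2 h; linarith
      rw [this, prob_compl_eq_one_iff (measurableSet_eq_fun (by fun_prop) (by fun_prop)) |>.2 (hyper_null x hx), h]
      simp [pi_ne_zero]
  · have hpos : 0 < 1 - c ^ 2 := lt_of_le_of_ne (by linarith) (fun h => hz (by linarith))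
    set s := √(1 - c^2) with hs
    have hs0 : 0 < s := Real.sqrt_pos.2 hpos
    have hs2 : s ^ 2 = 1 - c ^ 2 := Real.sq_sqrt hpos.le
    set w : Fin n → ℝ := fun j => (y j - c * x j) / s with hw
    have hw1 : ∑ j, w j ^ 2 = 1 := by
      simp only [hw, div_pow, ← Finset.sum_div, hsq, hs2]
      exact div_self hpos.ne'
    have hxw : ∑ j, x j * w j = 0 := by
      have : ∀ j, x j * w j = (x j * y j - c * x j ^ 2) / s := by intro j; simp only [hw]; ring
      simp_rw [this, ← Finset.sum_div, Finset.sum_sub_distrib, ← Finset.mul_sum, hx, ← hc]; simp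
    have hW := wedge (arccos c) (arccos_nonneg c) (arccos_le_pi c)
    rw [← pair_law x w hx hw1 hxw, Measure.map_apply (by fun_prop) (by measurability)] at hW
    refine hW.trans (le_of_eq ?_)
    congr 1
    ext a
    simp only [Set.mem_preimage, Set.mem_ofPred_eq]
    rw [cos_arccos hcl hcu, sin_arccos]
    have : c * ∑ j, a j * x j + √(1 - c^2) * ∑ j, a j * w j = ∑ j, a j * y j := by
      rw [Finset.mul_sum, Finset.mul_sum, ← Finset.sum_add_distrib]
      apply Finset.sum_congr rfl
      intro j _
      simp only [hw, ← hs]; field_simp; ring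
    rw [this]

lemma alpha_spec (c ε : ℝ) (hcl : -1 ≤ c) (hcu : c ≤ 1) (hε : 0 < ε)
    (h : (4 / sInf ((fun θ : ℝ => (2 / π) * θ / (1 - Real.cos θ)) '' Set.Ioo 0 (2 * π))) * ε < 2 - 2 * c) :
    ε < arccos c / π := by
  set S := ((fun θ : ℝ => (2 / π) * θ / (1 - Real.cos θ)) '' Set.Ioo 0 (2 * π)) with hS
  have hlow : ∀ v ∈ S, 2 / π ≤ v := by
    rintro _ ⟨θ, ⟨h0, h1⟩, rfl⟩
    have hcos : cos θ < 1 := by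
      refine lt_of_le_of_ne (cos_le_one θ) ?_
      intro h
      have := (cos_eq_one_iff_of_lt_of_lt (by linarith) h1).1 h
      linarith
    have : 1 - cos θ ≤ θ := by
      rcases le_total θ 2 with h2 | h2
      · have := one_sub_sq_div_two_le_cos (x := θ); nlinarith
      · have := neg_one_le_cos θ; linarith
    simp only
    rw [le_div_iff₀ (by linarith)]
    gcongr
  have hne : S.Nonempty := ⟨_, ⟨π, ⟨pi_pos, by linarith [pi_pos]⟩, rfl⟩⟩
  have hpos : 0 < sInf S := lt_of_lt_of_le (by positivity) (le_csInf hne hlow)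
  have hbdd : BddBelow S := ⟨2 / π, hlow⟩
  have hclt : c < 1 := by
    have : 0 < 4 / sInf S * ε := by positivity
    linarith
  have hth : 0 < arccos c := arccos_pos.2 hclt
  have hle : sInf S ≤ (2 / π) * arccos c / (1 - c) := by
    refine csInf_le hbdd ⟨arccos c, ⟨hth, by linarith [arccos_le_pi c, pi_pos]⟩, ?_⟩
    simp only [cos_arccos hcl hcu]
  rw [le_div_iff₀ (by linarith)] at hle
  rw [div_mul_eq_mul_div, div_lt_iff₀ hpos] at h
  have e : (2 / π) * arccos c = 2 * (arccos c / π) := by ring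
  nlinarith

lemma sum_choose_le (N D E : ℕ) (h : E ≤ D) : ∑ i ∈ Finset.Iic E, N.choose i ≤ (N + 1) ^ D := by
  calc ∑ i ∈ Finset.Iic E, N.choose i ≤ ∑ i ∈ Finset.range (D + 1), N.choose i := by
        apply Finset.sum_le_sum_of_subset
        intro i hi
        simp only [Finset.mem_Iic] at hi
        simp only [Finset.mem_range]; omega
    _ ≤ ∑ i ∈ Finset.range (D + 1), N ^ i * 1 ^ (D - i) * D.choose i := by
        apply Finset.sum_le_sum
        intro i hi
        simp only [Finset.mem_range] at hi
        have h1 : N.choose i ≤ N ^ i := Nat.choose_le_pow N i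
        have h2 : 0 < D.choose i := Nat.choose_pos (by omega)
        rw [one_pow, mul_one]
        exact h1.trans (Nat.le_mul_of_pos_right _ h2)
    _ = (N + 1) ^ D := (add_pow N 1 D).symm

open Classical in
lemma halfspace_growth {ι : Type*} [Fintype ι] {n : ℕ} (y : ι → Fin n → ℝ) (S : Finset (Fin n)) :
    (Finset.univ.filter (fun T : Finset ι => ∃ v : Fin n → ℝ, (∀ j ∉ S, v j = 0) ∧
      ∀ i, i ∈ T ↔ ∑ j, y i j * v j < 0)).card ≤ (Fintype.card ι + 1) ^ S.card := by
  set 𝒜 := Finset.univ.filter (fun T : Finset ι => ∃ v : Fin n → ℝ, (∀ j ∉ S, v j = 0) ∧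
      ∀ i, i ∈ T ↔ ∑ j, y i j * v j < 0) with h𝒜
  refine (Finset.card_le_card_shatterer 𝒜).trans (Finset.card_shatterer_le_sum_vcDim.trans ?_)
  apply sum_choose_le
  apply Finset.sup_le
  intro t ht
  rw [Finset.mem_shatterer] at ht
  by_contra! hlt
  have hnl : ¬ LinearIndependent ℝ (fun i : t => fun j : S => y i j) := by
    intro hl
    have := hl.fintype_card_le_finrank
    simp at this
    omega
  rw [Fintype.not_linearIndependent_iff] at hnl
  have hpos : ∃ g : t → ℝ, (∑ i, g i • (fun j : S => y i j)) = 0 ∧ ∃ i, 0 < g i := by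
    obtain ⟨g, hg, i, hi⟩ := hnl
    rcases lt_or_gt_of_ne hi with h | h
    · refine ⟨fun i => - g i, ?_, i, by simpa using h⟩
      simp only [neg_smul, Finset.sum_neg_distrib, hg, neg_zero]
    · exact ⟨g, hg, i, h⟩
  obtain ⟨g, hg, i0, hi0⟩ := hpos
  obtain ⟨T, hT, hTt⟩ := ht (t := (Finset.univ.filter (fun i : t => 0 < g i)).map (Function.Embedding.subtype _)) (by
    intro i hi
    simp only [Finset.mem_map, Finset.mem_filter] at hi
    obtain ⟨a, _, rfl⟩ := hi
    exact a.2)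
  simp only [h𝒜, Finset.mem_filter, Finset.mem_univ, true_and] at hT
  obtain ⟨v, hv, hTv⟩ := hT
  have hmem : ∀ i : t, 0 < g i ↔ ∑ j, y i j * v j < 0 := by
    intro i
    rw [← hTv]
    have : (i : ι) ∈ t ∩ T ↔ 0 < g i := by
      rw [hTt]; simp
    rw [← this]; simp
  have hzero : ∑ i : t, g i * ∑ j, y i j * v j = 0 := by
    have h1 : ∀ i : t, ∑ j, y i j * v j = ∑ j : S, y i j * v j := by
      intro i
      rw [← Finset.sum_coe_sort S (fun j => y i j * v j) |>.symm]
      symm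
      apply Finset.sum_subset (Finset.subset_univ _)
      intro j _ hj; rw [hv j hj, mul_zero]
    simp_rw [h1, Finset.mul_sum]
    rw [Finset.sum_comm]
    apply Finset.sum_eq_zero
    intro j _
    have := congrFun hg j
    simp only [Finset.sum_apply, Pi.smul_apply, smul_eq_mul, Pi.zero_apply] at this
    simp_rw [← mul_assoc, ← Finset.sum_mul, this, zero_mul]
  have hneg : ∑ i : t, g i * ∑ j, y i j * v j < 0 := by
    refine Finset.sum_neg' ?_ ⟨i0, Finset.mem_univ _, mul_neg_of_pos_of_neg hi0 ((hmem i0).1 hi0)⟩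
    · intro i _
      by_cases h : 0 < g i
      · exact (mul_neg_of_pos_of_neg h ((hmem i).1 h)).le
      · have := mt (hmem i).2 h
        exact mul_nonpos_of_nonpos_of_nonneg (not_lt.1 h) (not_lt.1 this)
  linarith

open Classical in
lemma sparse_growth {ι : Type*} [Fintype ι] {n k : ℕ} (hkn : k ≤ n) (y : ι → Fin n → ℝ)
    (S : Finset (Fin n)) (hS : S.card ≤ k) :
    (Finset.univ.filter (fun T : Finset ι => ∃ v : Fin n → ℝ,
      (∃ s : Finset (Fin n), s.card ≤ k ∧ ∀ j ∉ s ∪ S, v j = 0) ∧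
      ∀ i, i ∈ T ↔ ∑ j, y i j * v j < 0)).card ≤ n ^ k * (Fintype.card ι + 1) ^ (2 * k) := by
  have hsub : (Finset.univ.filter (fun T : Finset ι => ∃ v : Fin n → ℝ,
      (∃ s : Finset (Fin n), s.card ≤ k ∧ ∀ j ∉ s ∪ S, v j = 0) ∧
      ∀ i, i ∈ T ↔ ∑ j, y i j * v j < 0)) ⊆ (Finset.powersetCard k Finset.univ).biUnion (fun s =>
      (Finset.univ.filter (fun T : Finset ι => ∃ v : Fin n → ℝ, (∀ j ∉ s ∪ S, v j = 0) ∧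
      ∀ i, i ∈ T ↔ ∑ j, y i j * v j < 0))) := by
    intro T hT
    simp only [Finset.mem_filter, Finset.mem_univ, true_and] at hT
    obtain ⟨v, ⟨s, hs, hv⟩, hT⟩ := hT
    obtain ⟨s', hss', hs'⟩ := Finset.exists_superset_card_eq hs (by simpa using hkn)
    simp only [Finset.mem_biUnion, Finset.mem_powersetCard, Finset.mem_filter, Finset.mem_univ, true_and]
    refine ⟨s', ⟨Finset.subset_univ _, hs'⟩, v, ?_, hT⟩
    intro j hj
    exact hv j (fun h => hj (Finset.union_subset_union_left hss' h))
  refine (Finset.card_le_card hsub).trans (Finset.card_biUnion_le.trans ?_)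
  calc _ ≤ ∑ s ∈ Finset.powersetCard k (Finset.univ : Finset (Fin n)), (Fintype.card ι + 1) ^ (2 * k) := by
        apply Finset.sum_le_sum
        intro s hs
        refine (halfspace_growth y (s ∪ S)).trans ?_
        apply Nat.pow_le_pow_right (by omega)
        have := Finset.card_union_le s S
        have := (Finset.mem_powersetCard.1 hs).2
        omega
    _ ≤ _ := by
        rw [Finset.sum_const, Finset.card_powersetCard, Finset.card_univ, Fintype.card_fin, smul_eq_mul]
        gcongr
        exact Nat.choose_le_pow n k

/-- swap -/
def sw {m : ℕ} (σ : Finset (Fin m)) : Equiv.Perm (Fin m ⊕ Fin m) :=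
  Function.Involutive.toPerm
    (fun p => match p with
      | Sum.inl i => if i ∈ σ then Sum.inr i else Sum.inl i
      | Sum.inr i => if i ∈ σ then Sum.inl i else Sum.inr i)
    (by
      rintro (i | i) <;> by_cases h : i ∈ σ <;> simp [h])

lemma sw_inl {m : ℕ} (σ : Finset (Fin m)) (i : Fin m) :
    sw σ (Sum.inl i) = if i ∈ σ then Sum.inr i else Sum.inl i := rfl
lemma sw_inr {m : ℕ} (σ : Finset (Fin m)) (i : Fin m) :
    sw σ (Sum.inr i) = if i ∈ σ then Sum.inl i else Sum.inr i := rfl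

open Classical in
lemma swap_count {m : ℕ} (r : ℕ) (T : Finset (Fin m ⊕ Fin m)) :
    2 ^ r * (Finset.univ.filter (fun σ : Finset (Fin m) => (∀ i, sw σ (Sum.inl i) ∉ T) ∧
      r ≤ (Finset.univ.filter (fun i => sw σ (Sum.inr i) ∈ T)).card)).card ≤ 2 ^ m := by
  set F := (Finset.univ.filter (fun σ : Finset (Fin m) => (∀ i, sw σ (Sum.inl i) ∉ T) ∧
      r ≤ (Finset.univ.filter (fun i => sw σ (Sum.inr i) ∈ T)).card)) with hF
  set Q := Finset.univ.filter (fun i : Fin m => Sum.inl i ∈ T ∨ Sum.inr i ∈ T) with hQ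
  by_cases hne : F.Nonempty
  · obtain ⟨σ0, h0⟩ := hne
    simp only [hF, Finset.mem_filter, Finset.mem_univ, true_and] at h0
    have hrQ : r ≤ Q.card := by
      refine h0.2.trans (Finset.card_le_card ?_)
      intro i hi
      have hi := (Finset.mem_filter.1 hi).2
      rw [sw_inr] at hi
      simp only [Finset.mem_filter, Finset.mem_univ, true_and, hQ]
      split_ifs at hi
      · exact Or.inl hi
      · exact Or.inr hi
    have hdet : ∀ σ ∈ F, ∀ i ∈ Q, (i ∈ σ ↔ Sum.inl i ∈ T) := by
      intro σ hσ i hi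
      simp only [hF, Finset.mem_filter, Finset.mem_univ, true_and] at hσ
      simp only [hQ, Finset.mem_filter, Finset.mem_univ, true_and] at hi
      have := hσ.1 i
      rw [sw_inl] at this
      split_ifs at this with h <;> tauto
    have hcard : F.card ≤ (Finset.powerset Qᶜ).card := by
      apply Finset.card_le_card_of_injOn (fun σ => σ \ Q)
      · intro σ _
        simp only [Finset.coe_powerset, Set.mem_preimage, Set.mem_powerset_iff, Finset.coe_subset]
        intro i hi
        simp only [Finset.mem_sdiff] at hi
        simp [hi.2]
      · intro σ hσ τ hτ hst
        ext i
        by_cases hi : i ∈ Q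
        · rw [hdet σ hσ i hi, hdet τ hτ i hi]
        · have := Finset.ext_iff.1 hst i
          simpa [hi] using this
    rw [Finset.card_powerset, Finset.card_compl, Fintype.card_fin] at hcard
    have hQm : Q.card ≤ m := by simpa using Finset.card_le_univ Q
    calc 2 ^ r * F.card ≤ 2 ^ Q.card * 2 ^ (m - Q.card) := by gcongr; norm_num
      _ = 2 ^ m := by rw [← pow_add]; congr 1; omega
  · rw [Finset.not_nonempty_iff_eq_empty.1 hne]; simp


open Classical in
lemma half_lemma {X : Type*} [MeasurableSpace X] (P : Measure X) [IsProbabilityMeasure P]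
    (R : Set X) (hR : MeasurableSet R) (ε : ℝ) (hP : ε ≤ P.real R) (m r : ℕ)
    (hm : 5 ≤ ε * m) (hr : (r : ℝ) < ε * m / 2 + 1) :
    (1 / 2 : ENNReal) ≤ (Measure.pi fun _ : Fin m => P)
      {b | r ≤ (Finset.univ.filter (fun i => b i ∈ R)).card} := by
  set μ := (Measure.pi fun _ : Fin m => P)
  set f : X → ℝ := fun a => if a ∈ R then 1/2 else 1 with hf
  have hfm : Measurable f := Measurable.ite hR measurable_const measurable_const
  have hf0 : ∀ a, 0 ≤ f a := by intro a; simp only [hf]; split_ifs <;> norm_num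
  have hprod : ∀ b : Fin m → X, ∏ i, f (b i) = (1/2) ^ (Finset.univ.filter (fun i => b i ∈ R)).card := by
    intro b
    simp only [hf]
    rw [Finset.prod_ite]; simp
  have hint : ∫ a, f a ∂P = 1 - P.real R / 2 := by
    have : f = fun a => 1 - R.indicator (fun _ => (1/2 : ℝ)) a := by
      ext a; by_cases h : a ∈ R <;> simp [hf, h]; norm_num
    rw [this, integral_sub (integrable_const _) ((integrable_const _).indicator hR),
      integral_indicator_const _ hR]
    simp; ring
  have hI : ∫ b, ∏ i, f (b i) ∂μ = (1 - P.real R / 2) ^ m := by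
    rw [integral_fintype_prod_eq_pow (f := f), hint]; simp
  have hIle : ∫ b, ∏ i, f (b i) ∂μ ≤ Real.exp (- (ε * m / 2)) := by
    rw [hI]
    have h1 : P.real R ≤ 1 := measureReal_le_one
    calc (1 - P.real R / 2) ^ m ≤ (Real.exp (-(ε/2))) ^ m := by
          apply pow_le_pow_left₀ (by linarith)
          have := Real.add_one_le_exp (-(ε/2)); linarith
      _ = _ := by rw [← Real.exp_nat_mul]; congr 1; ring
  have hmeas : MeasurableSet {b : Fin m → X | r ≤ (Finset.univ.filter (fun i => b i ∈ R)).card} := by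
    have : Measurable (fun b : Fin m → X => (Finset.univ.filter (fun i => b i ∈ R)).card) := by
      simp only [Finset.card_filter]
      apply Finset.measurable_sum
      intro i _
      exact Measurable.ite ((measurable_pi_apply i) hR) measurable_const measurable_const
    exact this measurableSet_Ici
  have hcompl : μ.real {b : Fin m → X | r ≤ (Finset.univ.filter (fun i => b i ∈ R)).card}ᶜ ≤ 1 / 2 := by
    set L := Real.exp (- (log 2 * (ε * m / 2))) with hL
    have hL0 : 0 < L := Real.exp_pos _
    have hsub : {b : Fin m → X | r ≤ (Finset.univ.filter (fun i => b i ∈ R)).card}ᶜ ⊆ {b | L ≤ ∏ i, f (b i)} := by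
      intro b hb
      simp only [Set.mem_compl_iff, Set.mem_ofPred_eq, not_le] at hb ⊢
      rw [hprod, hL, one_div, inv_pow, Real.exp_neg]
      apply inv_anti₀ (by positivity)
      have : (2:ℝ) ^ (Finset.univ.filter (fun i => b i ∈ R)).card = Real.exp (log 2 * (Finset.univ.filter (fun i => b i ∈ R)).card) := by
        rw [mul_comm, Real.exp_nat_mul, Real.exp_log (by norm_num)]
      rw [this]
      apply Real.exp_le_exp.2
      apply mul_le_mul_of_nonneg_left _ (log_nonneg (by norm_num))
      have : ((Finset.univ.filter (fun i => b i ∈ R)).card : ℝ) + 1 ≤ r := by exact_mod_cast hb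
      linarith
    have hmk := mul_meas_ge_le_integral_of_nonneg (μ := μ) (f := fun b => ∏ i, f (b i))
      (ae_of_all _ fun b => Finset.prod_nonneg fun i _ => hf0 _)
      (by
        refine Integrable.of_bound (C := 1) ?_ (ae_of_all _ ?_)
        · exact (Finset.measurable_prod _ fun i _ => hfm.comp (measurable_pi_apply i)).aestronglyMeasurable
        · intro b
          rw [Real.norm_of_nonneg (Finset.prod_nonneg fun i _ => hf0 _), hprod]
          exact pow_le_one₀ (by norm_num) (by norm_num)) L
    have h2 : L * μ.real {b : Fin m → X | r ≤ (Finset.univ.filter (fun i => b i ∈ R)).card}ᶜ ≤ Real.exp (- (ε * m / 2)) := by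
      refine le_trans ?_ (hmk.trans hIle)
      exact mul_le_mul_of_nonneg_left (measureReal_mono hsub) hL0.le
    have h3 : Real.exp (- (ε * m / 2)) ≤ L * (1/2) := by
      have : (1/2 : ℝ) = Real.exp (- log 2) := by rw [Real.exp_neg, Real.exp_log (by norm_num)]; norm_num
      rw [this, hL, ← Real.exp_add]
      apply Real.exp_le_exp.2
      have := Real.log_two_lt_d9
      nlinarith
    exact le_of_mul_le_mul_left (h2.trans h3) hL0
  have hre : (1/2 : ℝ) ≤ μ.real {b : Fin m → X | r ≤ (Finset.univ.filter (fun i => b i ∈ R)).card} := by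
    rw [probReal_compl_eq_one_sub hmeas] at hcompl
    linarith
  have := ENNReal.ofReal_le_ofReal hre
  rw [ofReal_measureReal] at this
  refine le_trans (le_of_eq ?_) this
  rw [ENNReal.ofReal_div_of_pos (by norm_num)]; simp

open Classical in
lemma eps_net {X V : Type*} [MeasurableSpace X] (P : Measure X) [IsProbabilityMeasure P]
    (m r G : ℕ) (R A : V → Set X) (hdisj : ∀ v a, a ∈ A v → a ∉ R v)
    (hB1 : MeasurableSet {a : Fin m → X | ∃ v, ∀ i, a i ∈ A v})
    (hB2 : MeasurableSet {c : Fin m ⊕ Fin m → X | ∃ v, (∀ i, c (Sum.inl i) ∈ A v) ∧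
      r ≤ (Finset.univ.filter (fun i => c (Sum.inr i) ∈ R v)).card})
    (hG : ∀ c : Fin m ⊕ Fin m → X, (Finset.univ.filter (fun T : Finset (Fin m ⊕ Fin m) =>
      ∃ v, ∀ i, i ∈ T ↔ c i ∈ R v)).card ≤ G)
    (hhalf : ∀ v, (1 / 2 : ENNReal) ≤ (Measure.pi fun _ : Fin m => P)
      {b | r ≤ (Finset.univ.filter (fun i => b i ∈ R v)).card}) :
    2 ^ r * (Measure.pi fun _ : Fin m => P) {a : Fin m → X | ∃ v, ∀ i, a i ∈ A v} ≤ 2 * G := by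
  set μ := (Measure.pi fun _ : Fin m => P) with hμ
  set ν := (Measure.pi fun _ : Fin m ⊕ Fin m => P) with hν
  set B1 := {a : Fin m → X | ∃ v, ∀ i, a i ∈ A v} with hB1d
  set B2 := {c : Fin m ⊕ Fin m → X | ∃ v, (∀ i, c (Sum.inl i) ∈ A v) ∧
      r ≤ (Finset.univ.filter (fun i => c (Sum.inr i) ∈ R v)).card} with hB2d
  have step1 : 1 / 2 * μ B1 ≤ ν B2 := by
    have hmp := measurePreserving_sumPiEquivProdPi_symm (fun _ : Fin m ⊕ Fin m => P)
    rw [hν, ← hmp.measure_preimage hB2.nullMeasurableSet, Measure.prod_apply (hmp.measurable hB2)]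
    rw [← setLIntegral_const, ← lintegral_indicator hB1]
    apply lintegral_mono
    intro a
    by_cases ha : a ∈ B1
    · rw [Set.indicator_of_mem ha]
      obtain ⟨v, hv⟩ := ha
      refine (hhalf v).trans (measure_mono ?_)
      intro b hb
      exact ⟨v, hv, hb⟩
    · rw [Set.indicator_of_notMem ha]; exact zero_le
  have step2 : 2 ^ r * (2 ^ m * ν B2) ≤ G * 2 ^ m := by
    have hinv : ∀ σ : Finset (Fin m), MeasurePreserving (fun (c : Fin m ⊕ Fin m → X) i => c (sw σ i)) ν ν := by
      intro σ
      have := measurePreserving_piCongrLeft (fun _ : Fin m ⊕ Fin m => P) (sw σ)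
      have := this.symm
      exact this
    have hsum : 2 ^ m * ν B2 = ∫⁻ c, ∑ σ : Finset (Fin m), B2.indicator 1 (fun i => c (sw σ i)) ∂ν := by
      rw [lintegral_finsetSum]
      · have : ∀ σ : Finset (Fin m), ∫⁻ c, B2.indicator 1 (fun i => c (sw σ i)) ∂ν = ν B2 := by
          intro σ
          rw [(hinv σ).lintegral_comp (measurable_one.indicator hB2), lintegral_indicator_one hB2]
        simp [this]
      · intro σ _
        exact (measurable_one.indicator hB2).comp (hinv σ).measurable
    rw [hsum, ← lintegral_const_mul' _ _ (by simp)]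
    have hpt : ∀ c : Fin m ⊕ Fin m → X, (2:ENNReal) ^ r * ∑ σ : Finset (Fin m), B2.indicator 1 (fun i => c (sw σ i)) ≤ G * 2 ^ m := by
      intro c
      set W := (Finset.univ.filter (fun T : Finset (Fin m ⊕ Fin m) =>
        ∃ v, ∀ i, i ∈ T ↔ c i ∈ R v)) with hW
      have h1 : ∑ σ : Finset (Fin m), B2.indicator (1 : (Fin m ⊕ Fin m → X) → ENNReal) (fun i => c (sw σ i)) =
          ((Finset.univ.filter (fun σ : Finset (Fin m) => (fun i => c (sw σ i)) ∈ B2)).card : ENNReal) := by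
        rw [Finset.card_filter]; push_cast
        apply Finset.sum_congr rfl
        intro σ _
        by_cases h : (fun i => c (sw σ i)) ∈ B2 <;> simp [h]
      have h2 : (Finset.univ.filter (fun σ : Finset (Fin m) => (fun i => c (sw σ i)) ∈ B2)) ⊆
          W.biUnion (fun T => Finset.univ.filter (fun σ : Finset (Fin m) => (∀ i, sw σ (Sum.inl i) ∉ T) ∧
            r ≤ (Finset.univ.filter (fun i => sw σ (Sum.inr i) ∈ T)).card)) := by
        intro σ hσ
        obtain ⟨v, hv1, hv2⟩ := (Finset.mem_filter.1 hσ).2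
        rw [Finset.mem_biUnion]
        refine ⟨Finset.univ.filter (fun i => c i ∈ R v), ?_, ?_⟩
        · rw [hW, Finset.mem_filter]
          exact ⟨Finset.mem_univ _, v, fun i => by simp⟩
        · rw [Finset.mem_filter]
          refine ⟨Finset.mem_univ _, ?_, ?_⟩
          · intro i hi
            exact hdisj v _ (hv1 i) (Finset.mem_filter.1 hi).2
          · refine hv2.trans (Finset.card_le_card ?_)
            intro i hi
            have := (Finset.mem_filter.1 hi).2
            simpa using this
      have h3 : 2 ^ r * (Finset.univ.filter (fun σ : Finset (Fin m) => (fun i => c (sw σ i)) ∈ B2)).card ≤ G * 2 ^ m := by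
        calc _ ≤ 2 ^ r * ∑ T ∈ W, (Finset.univ.filter (fun σ : Finset (Fin m) => (∀ i, sw σ (Sum.inl i) ∉ T) ∧
            r ≤ (Finset.univ.filter (fun i => sw σ (Sum.inr i) ∈ T)).card)).card := by
              gcongr
              exact (Finset.card_le_card h2).trans Finset.card_biUnion_le
          _ ≤ ∑ T ∈ W, 2 ^ m := by
              rw [Finset.mul_sum]
              exact Finset.sum_le_sum fun T _ => swap_count r T
          _ ≤ _ := by
              rw [Finset.sum_const, smul_eq_mul]
              gcongr
              exact hG c
      rw [h1]
      exact_mod_cast h3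
    calc _ ≤ ∫⁻ c, G * 2 ^ m ∂ν := lintegral_mono hpt
      _ = _ := by simp
  have step3 : 2 ^ r * ν B2 ≤ G := by
    have h : (2 ^ r * ν B2) * 2 ^ m ≤ G * 2 ^ m := by
      refine le_trans (le_of_eq ?_) step2
      ring
    exact (ENNReal.mul_le_mul_iff_left (by simp) (by simp)).1 h
  calc 2 ^ r * μ B1 = 2 * (2 ^ r * (1 / 2 * μ B1)) := by
        rw [show (2:ENNReal) * (2 ^ r * (1 / 2 * μ B1)) = (2 * (1/2)) * (2 ^ r * μ B1) by ring]
        rw [one_div, ENNReal.mul_inv_cancel (by simp) (by simp), one_mul]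
    _ ≤ 2 * (2 ^ r * ν B2) := by gcongr
    _ ≤ _ := by gcongr

set_option maxHeartbeats 1000000 in
lemma numeric (n k m : ℕ) (hn : 2 ≤ n) (hk1 : 1 ≤ k) (hkn : k ≤ n) (ε : ℝ) (hε0 : 0 < ε) (hε1 : ε < 1)
    (hm : (8 * (Nat.floor (2 * k * logb 2 (n * Real.exp 1)) : ℝ) / ε) * logb 2 (8 * Real.exp 1 / ε) ≤ m) :
    5 ≤ ε * m ∧ k * logb 2 n + 2 * k * logb 2 (2 * m + 1) ≤ ε * m / 4 := by
  have hk : (1:ℝ) ≤ k := by exact_mod_cast hk1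
  have hn' : (2:ℝ) ≤ n := by exact_mod_cast hn
  have hkn' : (k:ℝ) ≤ n := by exact_mod_cast hkn
  have hln1 := Real.log_two_gt_d9
  have hln2 := Real.log_two_lt_d9
  set ℓ := logb 2 (Real.exp 1) with hℓ
  have hℓe : ℓ = 1 / log 2 := by rw [hℓ, logb, log_exp]
  have hℓ1 : 1.44 < ℓ := by rw [hℓe, lt_div_iff₀ (by linarith)]; linarith
  have hℓ2 : ℓ < 1.45 := by rw [hℓe, div_lt_iff₀ (by linarith)]; linarith
  set a := logb 2 (n:ℝ) with ha
  set b := - logb 2 ε with hb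
  have ha1 : 1 ≤ a := by
    rw [ha, le_logb_iff_rpow_le (by norm_num) (by linarith)]; simpa using hn'
  have hb0 : 0 ≤ b := by
    have := logb_nonpos (b := 2) (by norm_num) hε0.le hε1.le
    linarith
  have hu : logb 2 (n * Real.exp 1) = a + ℓ := by
    rw [logb_mul (by positivity) (by positivity)]
  have hE : logb 2 (8 * Real.exp 1 / ε) = 3 + ℓ + b := by
    rw [logb_div (by positivity) (by positivity), logb_mul (by positivity) (by positivity)]
    have : logb 2 (8:ℝ) = 3 := by
      rw [show (8:ℝ) = 2 ^ (3:ℝ) by norm_num, logb_rpow (by norm_num) (by norm_num)]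
    rw [this, hb]; ring
  rw [hu, hE] at hm
  have hd := Nat.lt_floor_add_one (2 * k * (a + ℓ))
  set d : ℝ := (Nat.floor (2 * k * (a + ℓ)) : ℝ) with hdd
  have hd2 : k * (1.5 * (a + 1.44)) ≤ d := by
    have h1 : (k:ℝ) * (1.5 * (a + 1.44)) + k ≤ 2 * k * (a + ℓ) := by
      have : (1.5 * (a + 1.44)) + 1 ≤ 2 * (a + ℓ) := by linarith
      nlinarith
    linarith
  set q := ε * m / k with hq
  have hqk : ε * m = q * k := by rw [hq]; field_simp
  have hm2 : 8 * d * (3 + ℓ + b) ≤ ε * m := by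
    rw [div_mul_eq_mul_div, div_le_iff₀ hε0] at hm
    linarith
  have hq1 : 12 * (a + 1.44) * (4.44 + b) ≤ q := by
    have h1 : 8 * (k * (1.5 * (a + 1.44))) * (4.44 + b) ≤ 8 * d * (3 + ℓ + b) := by
      have : 0 ≤ k * (1.5 * (a + 1.44)) := by positivity
      apply mul_le_mul <;> linarith
    have h2 : (12 * (a + 1.44) * (4.44 + b)) * k ≤ q * k := by
      rw [← hqk]; linarith
    exact le_of_mul_le_mul_right h2 (by linarith)
  have hq2 : 12 * (4.44 * a + 1.44 * 4.44 + 2.44 * b) ≤ q := by nlinarith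
  have hq0 : 0 < q := by nlinarith
  have hM5 : 5 ≤ ε * m := by rw [hqk]; nlinarith
  refine ⟨hM5, ?_⟩
  have hm1 : (1:ℝ) ≤ m := by
    by_contra h; push Not at h
    have : ε * m ≤ 1 * m := by gcongr
    linarith
  have hlogm : logb 2 (2 * m + 1) ≤ 1.6 + a + b + logb 2 q := by
    have h1 : logb 2 (2 * m + 1) ≤ logb 2 (3 * k * q / ε) := by
      apply logb_le_logb_of_le (by norm_num) (by positivity)
      have : 3 * k * q / ε = 3 * m := by
        rw [hq]; field_simp
      rw [this]; linarith
    rw [logb_div (by positivity) (by positivity), logb_mul (by positivity) (by positivity), logb_mul (by positivity) (by positivity)] at h1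
    have h2 : logb 2 (k:ℝ) ≤ a := logb_le_logb_of_le (by norm_num) (by positivity) hkn'
    have h3 : logb 2 (3:ℝ) ≤ 1.6 := by
      rw [logb_le_iff_le_rpow (by norm_num) (by norm_num)]
      have : (3:ℝ) ^ (5:ℝ) ≤ ((2:ℝ) ^ (1.6:ℝ)) ^ (5:ℝ) := by
        rw [← rpow_mul (by norm_num)]; norm_num
      exact (rpow_le_rpow_iff (by norm_num) (by positivity) (by norm_num)).1 this
    linarith
  have hlq : logb 2 q ≤ 5 + 1.45 * (q / 32) - 1.44 := by
    have h1 : logb 2 q = logb 2 (q / 32) + 5 := by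
      have h0 : logb 2 (q / 32) = logb 2 q - logb 2 32 := logb_div (show 0 < q by positivity).ne' (by norm_num)
      have : logb 2 (32:ℝ) = 5 := by
        rw [show (32:ℝ) = 2 ^ (5:ℝ) by norm_num, logb_rpow (by norm_num) (by norm_num)]
      linarith
    have h2 : logb 2 (q / 32) = ℓ * log (q / 32) := by rw [hℓe, logb]; ring
    have h3 := Real.log_le_sub_one_of_pos (show 0 < q / 32 by positivity)
    have h4 : ℓ * log (q / 32) ≤ ℓ * (q / 32 - 1) := mul_le_mul_of_nonneg_left h3 (by linarith)
    have h5 : ℓ * (q / 32) ≤ 1.45 * (q / 32) := by gcongr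
    nlinarith
  have hfin : a + 2 * logb 2 (2 * m + 1) ≤ q / 4 := by linarith
  calc k * a + 2 * k * logb 2 (2 * m + 1) = k * (a + 2 * logb 2 (2 * m + 1)) := by ring
    _ ≤ k * (q / 4) := by gcongr
    _ = ε * m / 4 := by rw [hqk]; ring

lemma numeric2 (n k m r : ℕ) (hn : 2 ≤ n) (ε δ : ℝ) (hδ : 0 < δ) (hε : 0 < ε)
    (h1 : k * logb 2 n + 2 * k * logb 2 (2 * m + 1) ≤ ε * m / 4)
    (h2 : (4 / ε) * logb 2 (2 / δ) ≤ m) (hr : ε * m / 2 ≤ r) :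
    2 * ((n ^ k * (m + m + 1) ^ (2 * k) : ℕ) : ℝ) ≤ 2 ^ r * δ := by
  have hn' : (2:ℝ) ≤ n := by exact_mod_cast hn
  have e1 : ((n ^ k * (m + m + 1) ^ (2 * k) : ℕ) : ℝ) ≤ 2 ^ (ε * m / 4) := by
    rw [← logb_le_iff_le_rpow (by norm_num) (by positivity)]
    push_cast
    rw [logb_mul (by positivity) (by positivity), logb_pow, logb_pow]
    refine le_trans (le_of_eq ?_) h1
    push_cast
    rw [show (m:ℝ) + m + 1 = 2 * m + 1 by ring]
  have e2 : 2 / δ ≤ 2 ^ (ε * m / 4) := by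
    rw [← logb_le_iff_le_rpow (by norm_num) (by positivity)]
    rw [div_mul_eq_mul_div, div_le_iff₀ hε] at h2
    linarith
  have e3 : (2:ℝ) ^ (ε * m / 4) * 2 ^ (ε * m / 4) ≤ 2 ^ r := by
    rw [← rpow_add (by norm_num), ← rpow_natCast]
    apply rpow_le_rpow_of_exponent_le (by norm_num)
    linarith
  rw [div_le_iff₀ hδ] at e2
  calc 2 * ((n ^ k * (m + m + 1) ^ (2 * k) : ℕ) : ℝ) ≤ (2 ^ (ε * m / 4) * δ) * 2 ^ (ε * m / 4) := by gcongr
    _ = (2 ^ (ε * m / 4) * 2 ^ (ε * m / 4)) * δ := by ring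
    _ ≤ _ := by gcongr

open ProbabilityTheory in
lemma perturb {n : ℕ} (x y : Fin n → ℝ) (e : ENNReal)
    (h : e < (Measure.pi fun _ : Fin n => gaussianReal 0 1)
      {a | (∑ j, a j * x j) * (∑ j, a j * y j) < 0}) :
    ∃ t : ℝ, 0 < t ∧ e < (Measure.pi fun _ : Fin n => gaussianReal 0 1)
      {a | (∑ j, a j * x j) * (∑ j, a j * (y j + t * x j)) < 0} := by
  have hlin : ∀ (a : Fin n → ℝ) (t : ℝ), ∑ j, a j * (y j + t * x j) = ∑ j, a j * y j + t * ∑ j, a j * x j := by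
    intro a t
    rw [Finset.mul_sum, ← Finset.sum_add_distrib]
    apply Finset.sum_congr rfl; intros; ring
  set E : ℕ → Set (Fin n → ℝ) := fun N => {a | (∑ j, a j * x j) * (∑ j, a j * (y j + (1 / ((N:ℝ) + 1)) * x j)) < 0} with hE
  have hmono : Monotone E := by
    intro N M hNM a ha
    simp only [hE, Set.mem_ofPred_eq, hlin] at ha ⊢
    have h1 : 1 / ((M:ℝ) + 1) ≤ 1 / ((N:ℝ) + 1) := by
      apply one_div_le_one_div_of_le (by positivity)
      have : (N:ℝ) ≤ M := by exact_mod_cast hNM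
      linarith
    nlinarith [mul_le_mul_of_nonneg_right h1 (mul_self_nonneg (∑ j, a j * x j))]
  have hU : {a : Fin n → ℝ | (∑ j, a j * x j) * (∑ j, a j * y j) < 0} ⊆ ⋃ N, E N := by
    intro a ha
    simp only [Set.mem_ofPred_eq] at ha
    set p := ∑ j, a j * x j with hp
    set s := ∑ j, a j * y j with hs
    have hp2 : 0 < p ^ 2 := by
      have : p ≠ 0 := by rintro h; rw [h] at ha; simp at ha
      positivity
    obtain ⟨N, hN⟩ := exists_nat_one_div_lt (show 0 < -(p * s) / p ^ 2 by apply div_pos <;> linarith)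
    rw [lt_div_iff₀ hp2] at hN
    rw [Set.mem_iUnion]
    refine ⟨N, ?_⟩
    simp only [hE, Set.mem_ofPred_eq, hlin]
    rw [← hp, ← hs]
    nlinarith
  have h' := lt_of_lt_of_le h (measure_mono hU)
  rw [hmono.measure_iUnion, lt_iSup_iff] at h'
  obtain ⟨N, hN⟩ := h'
  exact ⟨1 / ((N:ℝ) + 1), by positivity, hN⟩

lemma isOpen_dot {ι : Type*} {n : ℕ} (x v : Fin n → ℝ) (i : ι) :
    IsOpen {c : ι → Fin n → ℝ | 0 < (∑ j, c i j * x j) * (∑ j, c i j * v j)} :=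
  isOpen_lt (by fun_prop) (by fun_prop)

lemma isOpen_dot' {ι : Type*} {n : ℕ} (x v : Fin n → ℝ) (i : ι) :
    IsOpen {c : ι → Fin n → ℝ | (∑ j, c i j * x j) * (∑ j, c i j * v j) < 0} :=
  isOpen_lt (by fun_prop) (by fun_prop)

theorem consistent_obcs_gaussian_recovery (n k : ℕ) (hn : 2 ≤ n) (hk1 : 1 ≤ k) (hkn : k ≤ n)
    (x : Fin n → ℝ) (hx : sparse n k x) (hxnorm : ∑ j, (x j) ^ 2 = 1)
    (ε δ : ℝ) (hε : ε ∈ Set.Ioo (0 : ℝ) 1) (hδ : δ ∈ Set.Ioo (0 : ℝ) 1)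
    (m : ℕ)
    (hm : max ((8 * (Nat.floor (2 * k * logb 2 (n * Real.exp 1)) : ℝ) / ε) * logb 2 (8 * Real.exp 1 / ε))
              ((4 / ε) * logb 2 (2 / δ)) ≤ (m : ℝ)) :
    1 - ENNReal.ofReal δ ≤
      (Measure.pi fun _ : Fin m => (Measure.pi fun _ : Fin n => ProbabilityTheory.gaussianReal 0 1))
        {a : Fin m → Fin n → ℝ | ∀ xh : Fin n → ℝ,
          sparse n k xh → (∑ j, (xh j) ^ 2 = 1) →
          (∀ i : Fin m, (0 ≤ ∑ j, a i j * xh j) ↔ (0 ≤ ∑ j, a i j * x j)) →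
          ∑ j, (xh j - x j) ^ 2 ≤
            (4 / sInf ((fun θ : ℝ => (2 / π) * θ / (1 - Real.cos θ)) '' Set.Ioo 0 (2 * π))) * ε} := by
  classical
  obtain ⟨S, hScard, hSx⟩ := hx
  obtain ⟨hε0, hε1⟩ := hε
  obtain ⟨hδ0, hδ1⟩ := hδ
  have hm1 := (le_max_left _ _).trans hm
  have hm2 := (le_max_right _ _).trans hm
  obtain ⟨hM5, hlog⟩ := numeric n k m hn hk1 hkn ε hε0 hε1 hm1
  set P := (Measure.pi fun _ : Fin n => ProbabilityTheory.gaussianReal 0 1) with hP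
  set μ := (Measure.pi fun _ : Fin m => P) with hμ
  set r := ⌈ε * m / 2⌉₊ with hr
  have hr1 : ε * m / 2 ≤ r := Nat.le_ceil _
  have hr2 : (r : ℝ) < ε * m / 2 + 1 := Nat.ceil_lt_add_one (by positivity)
  let V := {v : Fin n → ℝ // (∃ s : Finset (Fin n), s.card ≤ k ∧ ∀ j ∉ s ∪ S, v j = 0) ∧
    ENNReal.ofReal ε < P {a | (∑ j, a j * x j) * (∑ j, a j * v j) < 0}}
  let R : V → Set (Fin n → ℝ) := fun v => {a | (∑ j, a j * x j) * (∑ j, a j * v.1 j) < 0}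
  let A : V → Set (Fin n → ℝ) := fun v => {a | 0 < (∑ j, a j * x j) * (∑ j, a j * v.1 j)}
  have hRm : ∀ v, MeasurableSet (R v) := fun v =>
    (isOpen_lt (f := fun a : Fin n → ℝ => (∑ j, a j * x j) * (∑ j, a j * v.1 j)) (g := fun _ => 0)
      (by fun_prop) (by fun_prop)).measurableSet
  have hnet := eps_net P m r (n ^ k * (m + m + 1) ^ (2 * k)) R A
    (by
      intro v a ha hb
      exact lt_asymm (a := (0:ℝ)) (b := (∑ j, a j * x j) * (∑ j, a j * v.1 j)) ha hb)
    (by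
      apply IsOpen.measurableSet
      have : {a : Fin m → Fin n → ℝ | ∃ v, ∀ i, a i ∈ A v} =
          ⋃ v : V, ⋂ i, {a | 0 < (∑ j, a i j * x j) * (∑ j, a i j * v.1 j)} := by
        ext a; simp only [Set.mem_iUnion, Set.mem_iInter]; rfl
      rw [this]
      exact isOpen_iUnion fun v => isOpen_iInter_of_finite fun i => isOpen_dot x v.1 i)
    (by
      apply IsOpen.measurableSet
      have : {c : Fin m ⊕ Fin m → Fin n → ℝ | ∃ v, (∀ i, c (Sum.inl i) ∈ A v) ∧
          r ≤ (Finset.univ.filter (fun i => c (Sum.inr i) ∈ R v)).card} =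
          ⋃ v : V, ((⋂ i : Fin m, {c | 0 < (∑ j, c (Sum.inl i) j * x j) * (∑ j, c (Sum.inl i) j * v.1 j)}) ∩
            ⋃ U : {U : Finset (Fin m) // r ≤ U.card}, ⋂ i : U.1,
              {c | (∑ j, c (Sum.inr i.1) j * x j) * (∑ j, c (Sum.inr i.1) j * v.1 j) < 0}) := by
        ext c
        simp only [Set.mem_iUnion, Set.mem_iInter, Set.mem_inter_iff]
        constructor
        · rintro ⟨v, h1, h2⟩
          refine ⟨v, h1, ⟨_, h2⟩, ?_⟩
          rintro ⟨i, hi⟩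
          exact (Finset.mem_filter.1 hi).2
        · rintro ⟨v, h1, ⟨U, hU⟩, h2⟩
          refine ⟨v, h1, hU.trans (Finset.card_le_card ?_)⟩
          intro i hi
          exact Finset.mem_filter.2 ⟨Finset.mem_univ _, h2 ⟨i, hi⟩⟩
      rw [this]
      exact isOpen_iUnion fun v => (isOpen_iInter_of_finite fun i => isOpen_dot x v.1 _).inter
        (isOpen_iUnion fun U => isOpen_iInter_of_finite fun i => isOpen_dot' x v.1 _))
    (by
      intro c
      have h := sparse_growth hkn (fun i j => (∑ l, c i l * x l) * c i j) S hScard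
      rw [Fintype.card_sum, Fintype.card_fin] at h
      refine le_trans (Finset.card_le_card ?_) h
      intro T hT
      obtain ⟨v, hv⟩ := (Finset.mem_filter.1 hT).2
      refine Finset.mem_filter.2 ⟨Finset.mem_univ _, v.1, v.2.1, fun i => (hv i).trans ?_⟩
      simp only [mul_assoc]
      rw [← Finset.mul_sum]
      exact Iff.rfl)
    (by
      intro v
      refine half_lemma P (R v) (hRm v) ε ?_ m r hM5 hr2
      have := v.2.2.le
      exact (ENNReal.ofReal_le_iff_le_toReal (measure_ne_top _ _)).1 this)
  have hB1 : μ {a : Fin m → Fin n → ℝ | ∃ v, ∀ i, a i ∈ A v} ≤ ENNReal.ofReal δ := by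
    have hnum := numeric2 n k m r hn ε δ hδ0 hε0 hlog hm2 hr1
    have h3 := ENNReal.ofReal_le_ofReal hnum
    rw [ENNReal.ofReal_mul (by norm_num), ENNReal.ofReal_mul (by positivity), ENNReal.ofReal_natCast,
      ENNReal.ofReal_pow (by norm_num), ENNReal.ofReal_ofNat] at h3
    exact (ENNReal.mul_le_mul_iff_right (by simp) (by simp)).1 (hnet.trans h3)
  have hN : μ {a : Fin m → Fin n → ℝ | ∃ i, ∑ j, a i j * x j = 0} = 0 := by
    have : {a : Fin m → Fin n → ℝ | ∃ i, ∑ j, a i j * x j = 0} = ⋃ i, Function.eval i ⁻¹' {a : Fin n → ℝ | ∑ j, a j * x j = 0} := by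
      ext a; simp only [Set.mem_iUnion]; rfl
    rw [this, measure_iUnion_null_iff]
    intro i
    exact (measurePreserving_eval (fun _ : Fin m => P) i).quasiMeasurePreserving.preimage_null (hyper_null x hxnorm)
  set Good := {a : Fin m → Fin n → ℝ | ∀ xh : Fin n → ℝ,
          sparse n k xh → (∑ j, (xh j) ^ 2 = 1) →
          (∀ i : Fin m, (0 ≤ ∑ j, a i j * xh j) ↔ (0 ≤ ∑ j, a i j * x j)) →
          ∑ j, (xh j - x j) ^ 2 ≤
            (4 / sInf ((fun θ : ℝ => (2 / π) * θ / (1 - Real.cos θ)) '' Set.Ioo 0 (2 * π))) * ε} with hGood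
  have hcover : Set.univ ⊆ (Good ∪ {a : Fin m → Fin n → ℝ | ∃ v, ∀ i, a i ∈ A v}) ∪ {a : Fin m → Fin n → ℝ | ∃ i, ∑ j, a i j * x j = 0} := by
    intro a _
    by_cases haN : ∃ i, ∑ j, a i j * x j = 0
    · exact Or.inr haN
    by_cases haG : a ∈ Good
    · exact Or.inl (Or.inl haG)
    refine Or.inl (Or.inr ?_)
    push Not at haN
    simp only [hGood, Set.mem_ofPred_eq] at haG
    push Not at haG
    obtain ⟨xh, ⟨s, hs, hsx⟩, hxh, hcons, hfar⟩ := haG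
    set c := ∑ j, x j * xh j with hc
    have hdist : ∑ j, (xh j - x j) ^ 2 = 2 - 2 * c := by
      have : ∀ j, (xh j - x j)^2 = xh j ^ 2 - 2 * (x j * xh j) + x j ^ 2 := by intro j; ring
      simp_rw [this, Finset.sum_add_distrib, Finset.sum_sub_distrib, ← Finset.mul_sum, hxnorm, hxh, ← hc]; ring
    have hdist' : ∑ j, (xh j + x j) ^ 2 = 2 + 2 * c := by
      have : ∀ j, (xh j + x j)^2 = xh j ^ 2 + 2 * (x j * xh j) + x j ^ 2 := by intro j; ring
      simp_rw [this, Finset.sum_add_distrib, ← Finset.mul_sum, hxnorm, hxh, ← hc]; ring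
    have hn1 : 0 ≤ ∑ j, (xh j - x j) ^ 2 := by positivity
    have hn2 : 0 ≤ ∑ j, (xh j + x j) ^ 2 := by positivity
    rw [hdist] at hfar
    have hang := alpha_spec c ε (by linarith) (by linarith) hε0 hfar
    have hPr := mismatch_ge x xh hxnorm hxh
    rw [← hc] at hPr
    have hlt := lt_of_lt_of_le ((ENNReal.ofReal_lt_ofReal_iff (hε0.trans hang)).2 hang) hPr
    obtain ⟨t, ht, htP⟩ := perturb x xh _ hlt
    refine ⟨⟨fun j => xh j + t * x j, ⟨s, hs, ?_⟩, htP⟩, ?_⟩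
    · intro j hj
      rw [Finset.mem_union, not_or] at hj
      show xh j + t * x j = 0
      rw [hsx j hj.1, hSx j hj.2]; simp
    · intro i
      show 0 < (∑ j, a i j * x j) * (∑ j, a i j * (xh j + t * x j))
      have hlin : ∑ j, a i j * (xh j + t * x j) = ∑ j, a i j * xh j + t * ∑ j, a i j * x j := by
        rw [Finset.mul_sum, ← Finset.sum_add_distrib]
        apply Finset.sum_congr rfl; intros; ring
      rw [hlin]
      have hci := hcons i
      rcases lt_or_gt_of_ne (haN i) with h | h
      · have h2 : ∑ j, a i j * xh j < 0 := by
          by_contra hh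
          exact absurd (hci.1 (not_lt.1 hh)) (not_le.2 h)
        exact mul_pos_of_neg_of_neg h (by nlinarith)
      · have h2 := hci.2 h.le
        exact mul_pos h (by positivity)
  have hone : (1 : ENNReal) ≤ μ Good + ENNReal.ofReal δ := by
    calc (1 : ENNReal) = μ Set.univ := measure_univ.symm
      _ ≤ _ := measure_mono hcover
      _ ≤ μ (Good ∪ {a : Fin m → Fin n → ℝ | ∃ v, ∀ i, a i ∈ A v}) + μ {a : Fin m → Fin n → ℝ | ∃ i, ∑ j, a i j * x j = 0} := measure_union_le _ _
      _ ≤ _ := by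
        rw [hN, add_zero]
        exact (measure_union_le _ _).trans (by gcongr)
  exact tsub_le_iff_right.2 hone
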